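/- Let n ≥ 2, let b be a real number with |b| < 1, let F(y) = ‖y‖ + b·y₁ on ℝⁿ, and let a, a' be real numbers with a² + a'² = 1; set v = a e₁ + a' e₂ and u = b e₁. Define the vector w = (n+1)/(2(1+ab)²) · u − (n+1)b(a+b)/(2(1+ab)³) · v. Then the fundamental tensor matrix g(v) applied to w yields the Euclidean gradient of τ(y) = ln √(det g(y)) at v; equivalently, g(v)·w is the vector whose first coordinate is (n+1) b a'² / (2(1+ab)), whose second coordinate is −(n+1) b a a' / (2(1+ab)), and whose remaining coordinates are 0. That is, w is the gradient of τ at v with respect to the inner product determined by g(v). -/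

import Mathlib

/-!
Away from the origin, put `r = ‖y‖` and `p = ∇F = y / r + b e₁`. Differentiating `½ F²` twice gives
`g = p pᵀ + (F / r) I - (F / r³) y yᵀ`.
This is `F / r` times a rank-two perturbation of the identity, so Sylvester's identity
`det (1 + U V) = det (1 + V U)` reduces its determinant to a `2 × 2` one; as `p · y = F`, the result
is `det g = (F / r) ^ (n + 1)`. Since `|b| < 1` makes `F` positive, `τ = (n + 1) / 2 · ln (F / r)`
near `v`, and at the unit vector `v` its Euclidean gradient is
`(n + 1) / 2 · (u - a b v) / (1 + a b)`.
On the other side `g(v) v = F p` (homogeneity) and `g(v) u = (p · u) p + F (u - a b v)`, where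
`p · u = b (a + b)`; the coefficients of `w` are those for which the `p` terms cancel.
-/


/-- The Randers norm `F(y) = ‖y‖ + b·y₁` on `ℝⁿ` (Euclidean norm). -/
noncomputable def randersF (n : ℕ) (hn : 0 < n) (b : ℝ)
    (y : EuclideanSpace ℝ (Fin n)) : ℝ :=
  ‖y‖ + b * y ⟨0, hn⟩

/-- The fundamental tensor of the Randers norm: the Hessian matrix of
`½ F²` at `y`, with entries `g_ij(y) = ½ ∂²(F²)/∂yⁱ∂yʲ (y)`. -/
noncomputable def fundTensor (n : ℕ) (hn : 0 < n) (b : ℝ)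
    (y : EuclideanSpace ℝ (Fin n)) : Matrix (Fin n) (Fin n) ℝ :=
  fun i j =>
    fderiv ℝ (fun z => fderiv ℝ (fun w => randersF n hn b w ^ 2 / 2) z
      (EuclideanSpace.single j 1)) y (EuclideanSpace.single i 1)

/-- The Euclidean gradient `y / ‖y‖ + b e₁` of the Randers norm, for `y ≠ 0`. -/
noncomputable def randersGrad (n : ℕ) (hn : 0 < n) (b : ℝ)
    (y : EuclideanSpace ℝ (Fin n)) : Fin n → ℝ :=
  fun j => ‖y‖⁻¹ * y j + b * (if j = ⟨0, hn⟩ then 1 else 0)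

lemma hasFDerivAt_norm_euclidean {n : ℕ} {z : EuclideanSpace ℝ (Fin n)} (hz : z ≠ 0) :
    HasFDerivAt (fun y : EuclideanSpace ℝ (Fin n) => ‖y‖) (‖z‖⁻¹ • innerSL ℝ z) z := by
  have hr : ‖z‖ ≠ 0 := norm_ne_zero_iff.mpr hz
  have h := ((hasStrictFDerivAt_norm_sq z).hasFDerivAt).sqrt (pow_ne_zero 2 hr)
  simp only [Real.sqrt_sq (norm_nonneg _)] at h
  refine h.congr_fderiv ?_
  rw [← Nat.cast_smul_eq_nsmul ℝ, smul_smul]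
  congr 1
  push_cast
  field_simp

lemma hasFDerivAt_coord {n : ℕ} (i : Fin n) (z : EuclideanSpace ℝ (Fin n)) :
    HasFDerivAt (fun y : EuclideanSpace ℝ (Fin n) => y i)
      (EuclideanSpace.proj i : EuclideanSpace ℝ (Fin n) →L[ℝ] ℝ) z :=
  (EuclideanSpace.proj i : EuclideanSpace ℝ (Fin n) →L[ℝ] ℝ).hasFDerivAt

lemma hasFDerivAt_randersF {n : ℕ} (hn : 0 < n) (b : ℝ) {z : EuclideanSpace ℝ (Fin n)}
    (hz : z ≠ 0) :
    HasFDerivAt (randersF n hn b) (‖z‖⁻¹ • innerSL ℝ z +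
      b • (EuclideanSpace.proj ⟨0, hn⟩ : EuclideanSpace ℝ (Fin n) →L[ℝ] ℝ)) z :=
  (hasFDerivAt_norm_euclidean hz).add ((hasFDerivAt_coord ⟨0, hn⟩ z).const_mul b)

lemma inner_single_one {n : ℕ} (z : EuclideanSpace ℝ (Fin n)) (i : Fin n) :
    inner ℝ z (EuclideanSpace.single i 1) = z i := by
  simp [EuclideanSpace.inner_single_right]

lemma fderiv_half_sq {n : ℕ} (hn : 0 < n) (b : ℝ) {z : EuclideanSpace ℝ (Fin n)}
    (hz : z ≠ 0) (j : Fin n) :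
    fderiv ℝ (fun w => randersF n hn b w ^ 2 / 2) z (EuclideanSpace.single j 1)
      = randersF n hn b z * randersGrad n hn b z j := by
  have h := ((hasFDerivAt_randersF hn b hz).pow 2).mul_const (2⁻¹ : ℝ)
  simp only [div_eq_mul_inv]
  rw [h.fderiv]
  simp [randersGrad, inner_single_one, eq_comm]
  split_ifs <;> ring

lemma fundTensor_eq {n : ℕ} (hn : 0 < n) (b : ℝ) {y : EuclideanSpace ℝ (Fin n)}
    (hy : y ≠ 0) :
    fundTensor n hn b y =
      Matrix.vecMulVec (randersGrad n hn b y) (randersGrad n hn b y)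
      + (randersF n hn b y / ‖y‖) • (1 : Matrix (Fin n) (Fin n) ℝ)
      - (randersF n hn b y / ‖y‖ ^ 3) • Matrix.vecMulVec (fun i => y i) (fun i => y i) := by
  have hr : ‖y‖ ≠ 0 := norm_ne_zero_iff.mpr hy
  ext i j
  have hev : (fun z => fderiv ℝ (fun w => randersF n hn b w ^ 2 / 2) z
      (EuclideanSpace.single j 1)) =ᶠ[nhds y]
      (fun z => randersF n hn b z * randersGrad n hn b z j) := by
    filter_upwards [isOpen_ne.mem_nhds hy] with z hz
    exact fderiv_half_sq hn b hz j
  have hinv := (hasDerivAt_inv hr).comp_hasFDerivAt y (hasFDerivAt_norm_euclidean hy)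
  have hp : HasFDerivAt (fun z => randersGrad n hn b z j) _ y :=
    (hinv.mul (hasFDerivAt_coord j y)).add_const (b * (if j = ⟨0, hn⟩ then 1 else 0))
  have h := (hasFDerivAt_randersF hn b hy).mul hp
  unfold fundTensor
  rw [hev.fderiv_eq]
  erw [h.fderiv]
  simp [randersGrad, inner_single_one, Matrix.vecMulVec_apply, Matrix.one_apply, eq_comm]
  split_ifs <;> field_simp <;> ring

lemma dotProduct_self {n : ℕ} (y : EuclideanSpace ℝ (Fin n)) :
    (fun i => y i) ⬝ᵥ (fun i => y i) = ‖y‖ ^ 2 := by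
  rw [EuclideanSpace.real_norm_sq_eq]
  simp [dotProduct, sq]

/-- Euler's identity for the 1-homogeneous function `F`. -/
lemma randersGrad_dotProduct {n : ℕ} (hn : 0 < n) (b : ℝ) {y : EuclideanSpace ℝ (Fin n)}
    (hy : y ≠ 0) :
    randersGrad n hn b y ⬝ᵥ (fun i => y i) = randersF n hn b y := by
  have hr : ‖y‖ ≠ 0 := norm_ne_zero_iff.mpr hy
  have h := dotProduct_self y
  simp only [dotProduct] at h
  simp only [dotProduct, randersGrad, add_mul, Finset.sum_add_distrib, mul_assoc,
    ← Finset.mul_sum, h, randersF]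
  simp
  field_simp

lemma randersF_pos {n : ℕ} (hn : 0 < n) {b : ℝ} (hb : |b| < 1) {y : EuclideanSpace ℝ (Fin n)}
    (hy : y ≠ 0) : 0 < randersF n hn b y := by
  have hr : 0 < ‖y‖ := norm_pos_iff.mpr hy
  have h1 : |y ⟨0, hn⟩| ≤ ‖y‖ := by simpa using PiLp.norm_apply_le y ⟨0, hn⟩
  have h2 : |b * y ⟨0, hn⟩| < ‖y‖ := by
    rw [abs_mul]
    calc |b| * |y ⟨0, hn⟩| ≤ |b| * ‖y‖ := by gcongr
      _ < 1 * ‖y‖ := by gcongr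
      _ = ‖y‖ := one_mul _
  have := (abs_lt.mp h2).1
  unfold randersF
  linarith

/-- `det g = (F / r) ^ (n + 1)`, by Sylvester's determinant identity. -/
lemma det_fundTensor {n : ℕ} (hn : 0 < n) {b : ℝ} (hb : |b| < 1)
    {y : EuclideanSpace ℝ (Fin n)} (hy : y ≠ 0) :
    (fundTensor n hn b y).det = (randersF n hn b y / ‖y‖) ^ (n + 1) := by
  have hr : ‖y‖ ≠ 0 := norm_ne_zero_iff.mpr hy
  have hF := (randersF_pos hn hb hy).ne'
  have h1 := dotProduct_self y
  have h2 := randersGrad_dotProduct hn b hy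
  have h3 : (fun i => y i) ⬝ᵥ randersGrad n hn b y = randersF n hn b y := by
    rw [dotProduct_comm, h2]
  rw [fundTensor_eq hn b hy]
  set p := randersGrad n hn b y
  set F := randersF n hn b y
  set r := ‖y‖
  -- `U` and `V` exhibit `g` as `F / r` times a rank-two perturbation of the identity.
  let U : Matrix (Fin n) (Fin 2) ℝ := Matrix.of fun i k => ![-(y i) / r ^ 2, r / F * p i] k
  let V : Matrix (Fin 2) (Fin n) ℝ := Matrix.of ![fun i => y i, p]
  have hg : Matrix.vecMulVec p p + (F / r) • (1 : Matrix (Fin n) (Fin n) ℝ)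
      - (F / r ^ 3) • Matrix.vecMulVec (fun i => y i) (fun i => y i)
      = (F / r) • (1 + U * V) := by
    ext i j
    simp [U, V, Matrix.mul_apply, Fin.sum_univ_two, Matrix.vecMulVec_apply]
    field_simp
    ring
  have hVU : V * U = !![-1, r; -(F / r ^ 2), r / F * (p ⬝ᵥ p)] := by
    simp only [dotProduct] at h1 h2 h3
    ext k l
    fin_cases k <;> fin_cases l
    · simp [U, V, Matrix.mul_apply, ← mul_div_assoc, ← Finset.sum_div, h1]
      field_simp
    · simp [U, V, Matrix.mul_apply, mul_left_comm _ (r / F), ← Finset.mul_sum, h3]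
      field_simp
    · simp [U, V, Matrix.mul_apply, ← mul_div_assoc, ← Finset.sum_div, h2]
      ring
    · simp [U, V, Matrix.mul_apply, mul_left_comm _ (r / F), ← Finset.mul_sum, dotProduct]
  rw [hg, Matrix.det_smul, Matrix.det_one_add_mul_comm, hVU, Matrix.det_fin_two]
  simp
  field_simp
  rw [pow_succ]
  field_simp

/-- The Euclidean gradient of `τ` is `(n + 1) / 2 · (∇F / F - y / r²)`. -/
lemma fderiv_tau {n : ℕ} (hn : 0 < n) {b : ℝ} (hb : |b| < 1)
    {y : EuclideanSpace ℝ (Fin n)} (hy : y ≠ 0) (i : Fin n) :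
    fderiv ℝ (fun y => Real.log (Real.sqrt (fundTensor n hn b y).det)) y
        (EuclideanSpace.single i 1)
      = ((n : ℝ) + 1) / 2 * (randersGrad n hn b y i / randersF n hn b y - y i / ‖y‖ ^ 2) := by
  have hr : ‖y‖ ≠ 0 := norm_ne_zero_iff.mpr hy
  have hF := (randersF_pos hn hb hy).ne'
  have hev : (fun y => Real.log (Real.sqrt (fundTensor n hn b y).det)) =ᶠ[nhds y]
      (fun y => (Real.log (randersF n hn b y) - Real.log ‖y‖) * (((n : ℝ) + 1) / 2)) := by
    filter_upwards [isOpen_ne.mem_nhds hy] with z hz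
    have hz' : 0 < ‖z‖ := norm_pos_iff.mpr hz
    have hFz := randersF_pos hn hb hz
    rw [det_fundTensor hn hb hz, Real.log_sqrt (by positivity), Real.log_pow,
      Real.log_div hFz.ne' hz'.ne']
    push_cast
    ring
  have h := (((hasFDerivAt_randersF hn b hy).log hF).sub
    ((hasFDerivAt_norm_euclidean hy).log hr)).mul_const (((n : ℝ) + 1) / 2)
  rw [hev.fderiv_eq]
  erw [h.fderiv]
  have hproj : (EuclideanSpace.proj ⟨0, hn⟩ : EuclideanSpace ℝ (Fin n) →L[ℝ] ℝ)
      (EuclideanSpace.single i 1) = if i = ⟨0, hn⟩ then 1 else 0 := by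
    simp [eq_comm]
  simp only [smul_apply, sub_apply, add_apply, innerSL_apply_apply, inner_single_one, hproj,
    smul_eq_mul, randersGrad]
  field_simp

/-- The gradient of `τ(y) = ln √(det g(y))` at `v = a e₁ + a' e₂` with
respect to the inner product determined by the fundamental tensor `g(v)` is
`w = (n+1)/(2(1+ab)²) u − (n+1)b(a+b)/(2(1+ab)³) v`, where `u = b e₁`:
`g(v)·w` equals the Euclidean gradient of `τ` at `v`, whose coordinates are
`(n+1)ba'²/(2(1+ab))`, `−(n+1)baa'/(2(1+ab))`, `0, …, 0`. -/
theorem killing_frames_stmt7 (n : ℕ) (hn : 2 ≤ n) (b : ℝ) (hb : |b| < 1)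
    (a a' : ℝ) (ha : a ^ 2 + a' ^ 2 = 1)
    (v u w : EuclideanSpace ℝ (Fin n))
    (hv : v = a • EuclideanSpace.single (⟨0, by omega⟩ : Fin n) 1
        + a' • EuclideanSpace.single (⟨1, by omega⟩ : Fin n) 1)
    (hu : u = b • EuclideanSpace.single (⟨0, by omega⟩ : Fin n) 1)
    (hw : w = (((n : ℝ) + 1) / (2 * (1 + a * b) ^ 2)) • u
        - (((n : ℝ) + 1) * b * (a + b) / (2 * (1 + a * b) ^ 3)) • v) :
    (∀ i : Fin n,
      (fundTensor n (by omega) b v).mulVec (fun j => w j) i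
        = fderiv ℝ
            (fun y => Real.log (Real.sqrt (fundTensor n (by omega) b y).det))
            v (EuclideanSpace.single i 1))
    ∧ (fundTensor n (by omega) b v).mulVec (fun j => w j) ⟨0, by omega⟩
        = ((n : ℝ) + 1) * b * a' ^ 2 / (2 * (1 + a * b))
    ∧ (fundTensor n (by omega) b v).mulVec (fun j => w j) ⟨1, by omega⟩
        = -(((n : ℝ) + 1) * b * a * a' / (2 * (1 + a * b)))
    ∧ ∀ i : Fin n, 2 ≤ (i : ℕ) →
        (fundTensor n (by omega) b v).mulVec (fun j => w j) i = 0 := by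
  have hn0 : 0 < n := by omega
  have hv0 : v ⟨0, by omega⟩ = a := by simp [hv]
  have hv1 : v ⟨1, by omega⟩ = a' := by simp [hv]
  have hvi : ∀ i : Fin n, 2 ≤ (i : ℕ) → v i = 0 := by
    intro i hi
    have h0 : i ≠ ⟨0, by omega⟩ := fun h => by simp [h] at hi
    have h1 : i ≠ ⟨1, by omega⟩ := fun h => by simp [h] at hi
    simp [hv, h0, h1]
  have hui : ∀ i : Fin n, u i = b * (if i = ⟨0, hn0⟩ then 1 else 0) := by
    intro i
    simp [hu]
  have hnorm : ‖v‖ = 1 := by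
    have h : ‖v‖ ^ 2 = 1 := by
      have hs : v = a • EuclideanSpace.single (⟨0, by omega⟩ : Fin n) 1
        + a' • EuclideanSpace.single (⟨1, by omega⟩ : Fin n) 1 := hv
      rw [← real_inner_self_eq_norm_sq]
      nth_rewrite 2 [hs]
      rw [inner_add_right, inner_smul_right, inner_smul_right, inner_single_one,
        inner_single_one, hv0, hv1]
      linarith
    exact (pow_eq_one_iff_of_nonneg (norm_nonneg v) two_ne_zero).mp h
  have hvne : v ≠ 0 := by
    rintro rfl
    simp at hnorm
  have hF : randersF n hn0 b v = 1 + a * b := by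
    simp [randersF, hnorm, hv0, mul_comm]
  have hFpos : 0 < 1 + a * b := hF ▸ randersF_pos hn0 hb hvne
  have hp : ∀ i, randersGrad n hn0 b v i = v i + u i := by
    intro i
    simp [randersGrad, hnorm, hui]
  have hvv : (fun i => v i) ⬝ᵥ (fun i => v i) = 1 := by rw [dotProduct_self, hnorm, one_pow]
  have hvu : (fun i => v i) ⬝ᵥ (fun i => u i) = a * b := by
    simp [dotProduct, hui, hv0, mul_comm]
  have huu : (fun i => u i) ⬝ᵥ (fun i => u i) = b ^ 2 := by
    simp [dotProduct, hui, sq]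
  have hpE : randersGrad n hn0 b v = (fun i => v i) + (fun i => u i) := funext hp
  have hwE : (fun i => w i) = (((n : ℝ) + 1) / (2 * (1 + a * b) ^ 2)) • (fun i => u i)
        - (((n : ℝ) + 1) * b * (a + b) / (2 * (1 + a * b) ^ 3)) • (fun i => v i) := by
    funext i
    simp [hw]
  have hmul : ∀ i, (fundTensor n hn0 b v).mulVec (fun j => w j) i
      = ((n : ℝ) + 1) / 2 * ((u i - a * b * v i) / (1 + a * b)) := by
    intro i
    rw [fundTensor_eq hn0 b hvne, Matrix.sub_mulVec, Matrix.add_mulVec, Matrix.smul_mulVec,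
      Matrix.smul_mulVec, Matrix.one_mulVec, Matrix.vecMulVec_mulVec, Matrix.vecMulVec_mulVec,
      hpE, hwE, hF, hnorm]
    simp only [dotProduct_sub, dotProduct_smul, add_dotProduct, hvv, hvu, huu,
      dotProduct_comm (fun i => u i) (fun i => v i)]
    simp
    field_simp
    ring
  refine ⟨fun i => ?_, ?_, ?_, fun i hi => ?_⟩
  · rw [hmul, fderiv_tau hn0 hb hvne, hp, hF, hnorm]
    field_simp
    ring
  · rw [hmul, hv0, hui]
    have : a' ^ 2 = 1 - a ^ 2 := by linarith
    rw [this]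
    simp
    field_simp
  · rw [hmul, hv1, hui]
    simp
    field_simp
  · have h0 : i ≠ ⟨0, by omega⟩ := fun h => by simp [h] at hi
    rw [hmul, hvi i hi, hui]
    simp [h0]
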